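/- Let ρ ∈ (−1,1), u, v > 0, and let W¹, W² be independent standard Brownian motions started at 0. Set B¹_t = u + W¹_t, B²_t = v + ρ W¹_t + √(1−ρ²) W²_t, and τ = inf{t ≥ 0 : B¹_t B²_t = 0}. Also set W̄¹_t = u + W¹_t, W̄²_t = (v − ρu)/√(1−ρ²) + W²_t, and σ = inf{t ≥ 0 : (W̄¹_t, W̄²_t) ∈ ∂S(ρ)}, the first hitting time of the boundary of the sector S(ρ). Then τ = σ almost surely, and for every y ≥ 0: P(B¹_τ = 0 and B²_τ ≥ y) = P(W̄¹_σ = 0 and W̄²_σ ≥ y/√(1−ρ²)). -/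

import Mathlib

/-!
The equality of exit times holds for every path, not only almost surely. The linear map
`(x, y) ↦ (x, √(1-ρ²) y + ρ x)` carries `(V₁, V₂)` to `(B₁, B₂)` and the sector onto the closed
quadrant, so `(V₁, V₂)` lies on the boundary of the sector exactly when `min B₁ B₂ = 0`
(`mem_frontier_sector_iff`). This is more restrictive than `B₁ B₂ = 0`, but a continuous path that
starts in the open quadrant cannot reach `B₁ B₂ = 0` without `min B₁ B₂` having vanished, by the
intermediate value theorem, so the two infima agree (`hitTime_zeroSet_eq_of_min`). At the common
time, `B₁ = V₁`, and on `B₁ = 0` one has `B₂ = √(1-ρ²) V₂`, so the two events coincide as sets.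
Of the Brownian motions only continuity and the starting point matter.
-/


open MeasureTheory ProbabilityTheory Real Set
open scoped ENNReal NNReal

noncomputable section

/-- `IsCorrBM P ρ W₁ W₂` : on the probability space `(Ω, P)`, the pair `(W₁, W₂)` is a
two-dimensional centered Gaussian process with continuous paths, started at `0`, whose
finite-dimensional distributions are those of a pair of standard one-dimensional Brownian
motions with correlation `ρ` (so `ρ = 0` means two independent standard Brownian motions):
every finite real-linear combination of the values is a centered real Gaussian with the
variance determined by the covariances `E[W₁ₛ W₁ₜ] = E[W₂ₛ W₂ₜ] = s ∧ t` and
`E[W₁ₛ W₂ₜ] = ρ (s ∧ t)`. -/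
def IsCorrBM {Ω : Type*} [MeasurableSpace Ω] (P : Measure Ω) (ρ : ℝ)
    (W₁ W₂ : ℝ → Ω → ℝ) : Prop :=
  (∀ ω, Continuous fun t => W₁ t ω) ∧
  (∀ ω, Continuous fun t => W₂ t ω) ∧
  (∀ ω, W₁ 0 ω = 0) ∧ (∀ ω, W₂ 0 ω = 0) ∧
  ∀ (n : ℕ) (s t : Fin n → ℝ) (c d : Fin n → ℝ),
    (∀ i, 0 ≤ s i) → (∀ i, 0 ≤ t i) →
    Measure.map (fun ω => (∑ i, c i * W₁ (s i) ω) + ∑ i, d i * W₂ (t i) ω) P =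
      gaussianReal 0 (Real.toNNReal
        ((∑ i, ∑ j, c i * c j * min (s i) (s j)) +
         (∑ i, ∑ j, d i * d j * min (t i) (t j)) +
         2 * ρ * ∑ i, ∑ j, c i * d j * min (s i) (t j)))

/-- First hitting time (valued in `ℝ≥0∞`, with `⊤` meaning "never") of the set
`A ⊆ ℝ²` by the planar process `t ↦ (X t ω, Y t ω)`, over times `t ≥ 0`. -/
def hitTime {Ω : Type*} (A : Set (ℝ × ℝ)) (X Y : ℝ → Ω → ℝ) (ω : Ω) : ℝ≥0∞ :=
  sInf ((fun t : ℝ => ENNReal.ofReal t) '' {t : ℝ | 0 ≤ t ∧ (X t ω, Y t ω) ∈ A})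

/-- The complement of the open upper-right quadrant, as hit by `(B¹, B²)`:
the exit time from the open quadrant is the first time `B¹ B² = 0`. -/
def zeroSet : Set (ℝ × ℝ) := {q | q.1 * q.2 = 0}

/-- The sector `S(ρ) = {(x,y) : x ≥ 0, √(1−ρ²) y + ρ x ≥ 0}`
`= {(x,y) : x ≥ 0, y ≥ −(ρ/√(1−ρ²)) x}` for `ρ ∈ (−1,1)`. -/
def sector (ρ : ℝ) : Set (ℝ × ℝ) :=
  {q | 0 ≤ q.1 ∧ 0 ≤ Real.sqrt (1 - ρ ^ 2) * q.2 + ρ * q.1}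

/-- The boundary of the sector is the preimage of the boundary of the closed quadrant under
`(x, y) ↦ (x, √(1-ρ²) y + ρ x)`. -/
lemma mem_frontier_sector_iff {ρ : ℝ} (hs : 0 < Real.sqrt (1 - ρ ^ 2)) (q : ℝ × ℝ) :
    q ∈ frontier (sector ρ) ↔ min q.1 (Real.sqrt (1 - ρ ^ 2) * q.2 + ρ * q.1) = 0 := by
  set L : ℝ × ℝ →L[ℝ] ℝ :=
    Real.sqrt (1 - ρ ^ 2) • ContinuousLinearMap.snd ℝ ℝ ℝ + ρ • ContinuousLinearMap.fst ℝ ℝ ℝ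
    with hL
  have hLq : ∀ p : ℝ × ℝ, L p = Real.sqrt (1 - ρ ^ 2) * p.2 + ρ * p.1 := fun p => by simp [hL]
  have hLsurj : Function.Surjective L := fun z =>
    ⟨(0, z / Real.sqrt (1 - ρ ^ 2)), by rw [hLq]; field_simp; ring⟩
  have hLopen : IsOpenMap L := L.isOpenMap hLsurj
  have hset : sector ρ = Prod.fst ⁻¹' Ici (0 : ℝ) ∩ L ⁻¹' Ici 0 := by
    ext p; simp [sector, hLq]
  have hclosed : IsClosed (sector ρ) := by
    rw [hset]
    exact (isClosed_Ici.preimage continuous_fst).inter (isClosed_Ici.preimage L.continuous)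
  have hint : interior (sector ρ) = Prod.fst ⁻¹' Ioi (0 : ℝ) ∩ L ⁻¹' Ioi 0 := by
    rw [hset, interior_inter,
      ← isOpenMap_fst.preimage_interior_eq_interior_preimage continuous_fst,
      ← hLopen.preimage_interior_eq_interior_preimage L.continuous, interior_Ici]
  rw [hclosed.frontier_eq, hint, hset, ← hLq]
  simp only [mem_sdiff, mem_inter_iff, mem_preimage, mem_Ici, mem_Ioi]
  rw [← le_min_iff, ← lt_min_iff, not_lt, and_comm, ← le_antisymm_iff]

/-- For a continuous path starting in the open quadrant, the first zero of `X Y` is the first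
zero of `min X Y`; the set `A` and the path `(V₁, V₂)` serve only to record the latter. -/
lemma hitTime_zeroSet_eq_of_min {Ω : Type*} {A : Set (ℝ × ℝ)} {X Y V₁ V₂ : ℝ → Ω → ℝ} {ω : Ω}
    (hX : Continuous fun t => X t ω) (hY : Continuous fun t => Y t ω)
    (hX0 : 0 < X 0 ω) (hY0 : 0 < Y 0 ω)
    (hA : ∀ t, (V₁ t ω, V₂ t ω) ∈ A ↔ min (X t ω) (Y t ω) = 0) :
    hitTime zeroSet X Y ω = hitTime A V₁ V₂ ω := by
  apply le_antisymm
  · refine sInf_le_sInf (image_mono ?_)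
    rintro t ⟨ht, hmem⟩
    refine ⟨ht, ?_⟩
    rw [hA] at hmem
    rcases min_choice (X t ω) (Y t ω) with h | h <;> rw [h] at hmem <;> simp [zeroSet, hmem]
  · refine le_sInf ?_
    rintro _ ⟨t, ⟨ht, hmem⟩, rfl⟩
    have hle : min (X t ω) (Y t ω) ≤ 0 := by
      rcases mul_eq_zero.1 hmem with h | h
      · exact (min_le_left _ _).trans h.le
      · exact (min_le_right _ _).trans h.le
    obtain ⟨s, hs, hs0⟩ := intermediate_value_Icc' ht (hX.min hY).continuousOn
      ⟨hle, (lt_min hX0 hY0).le⟩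
    calc hitTime A V₁ V₂ ω ≤ ENNReal.ofReal s := sInf_le ⟨s, ⟨hs.1, (hA s).2 hs0⟩, rfl⟩
      _ ≤ ENNReal.ofReal t := ENNReal.ofReal_le_ofReal hs.2

/-- With `B¹_t = u + W¹_t`, `B²_t = v + ρ W¹_t + √(1−ρ²) W²_t`,
`τ = inf{t ≥ 0 : B¹_t B²_t = 0}`, and with `W̄¹_t = u + W¹_t`,
`W̄²_t = (v − ρu)/√(1−ρ²) + W²_t`, `σ` the first hitting time of the boundary
`∂S(ρ)` of the sector: `τ = σ` almost surely, and for every `y ≥ 0`,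
`P(B¹_τ = 0, B²_τ ≥ y) = P(W̄¹_σ = 0, W̄²_σ ≥ y/√(1−ρ²))`. -/
theorem quadrant_exit_eq_sector_exit
    {Ω : Type*} [MeasurableSpace Ω] (P : Measure Ω) [IsProbabilityMeasure P]
    (ρ u v : ℝ) (hρ : ρ ∈ Set.Ioo (-1 : ℝ) 1) (hu : 0 < u) (hv : 0 < v)
    (W₁ W₂ B₁ B₂ V₁ V₂ : ℝ → Ω → ℝ) (hW : IsCorrBM P 0 W₁ W₂)
    (hB₁ : ∀ t ω, B₁ t ω = u + W₁ t ω)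
    (hB₂ : ∀ t ω, B₂ t ω = v + ρ * W₁ t ω + Real.sqrt (1 - ρ ^ 2) * W₂ t ω)
    (hV₁ : ∀ t ω, V₁ t ω = u + W₁ t ω)
    (hV₂ : ∀ t ω, V₂ t ω = (v - ρ * u) / Real.sqrt (1 - ρ ^ 2) + W₂ t ω) :
    (∀ᵐ ω ∂P,
      hitTime zeroSet B₁ B₂ ω = hitTime (frontier (sector ρ)) V₁ V₂ ω) ∧
    ∀ y : ℝ, 0 ≤ y →
      P {ω | B₁ (hitTime zeroSet B₁ B₂ ω).toReal ω = 0 ∧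
             y ≤ B₂ (hitTime zeroSet B₁ B₂ ω).toReal ω} =
      P {ω | V₁ (hitTime (frontier (sector ρ)) V₁ V₂ ω).toReal ω = 0 ∧
             y / Real.sqrt (1 - ρ ^ 2) ≤
               V₂ (hitTime (frontier (sector ρ)) V₁ V₂ ω).toReal ω} := by
  obtain ⟨hc₁, hc₂, h0₁, h0₂, -⟩ := hW
  have hs : 0 < Real.sqrt (1 - ρ ^ 2) :=
    Real.sqrt_pos.2 (by nlinarith [hρ.1, hρ.2])
  have hlin : ∀ t ω, Real.sqrt (1 - ρ ^ 2) * V₂ t ω + ρ * V₁ t ω = B₂ t ω := fun t ω => by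
    rw [hV₁, hV₂, hB₂]; field_simp; ring
  have hBV : ∀ t ω, B₁ t ω = V₁ t ω := fun t ω => by rw [hB₁, hV₁]
  have key : ∀ ω, hitTime zeroSet B₁ B₂ ω = hitTime (frontier (sector ρ)) V₁ V₂ ω := fun ω => by
    apply hitTime_zeroSet_eq_of_min
    · simp only [hB₁]
      exact continuous_const.add (hc₁ ω)
    · simp only [hB₂]
      exact (continuous_const.add (continuous_const.mul (hc₁ ω))).add
        (continuous_const.mul (hc₂ ω))
    · rw [hB₁, h0₁]; linarith
    · rw [hB₂, h0₁, h0₂]; linarith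
    · intro t
      rw [mem_frontier_sector_iff hs, hlin, hBV]
  refine ⟨Filter.Eventually.of_forall key, fun y _ => congrArg P ?_⟩
  -- The two events agree for every `ω`; if the path never exits, both are read at time `0`.
  ext ω
  simp only [mem_ofPred_eq, key, hBV]
  refine and_congr_right fun h => ?_
  rw [← hlin, h, div_le_iff₀ hs, mul_zero, add_zero, mul_comm]
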